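/- arXiv:2009.12815 — 12 statements merged into one kernel-verified Lean document; each statement's English description precedes it below -/
import Mathlib

section
/- Let r be a braiding operator on a group G. Then r is a bijection of G×G and (G,r) is a braided object in Set, i.e. r satisfies the braid relation (id_G × r) ∘ (r × id_G) ∘ (id_G × r) = (r × id_G) ∘ (id_G × r) ∘ (r × id_G) as maps G×G×G → G×G×G. -/
/-!
Write `r (g, h) = (σ_g h, γ_h g)`.

Bijectivity: applying the axiom for `r (g, h * k)` with `k = h⁻¹` shows that `r (g, h) = (a, b)`
holds exactly when `r (b, h⁻¹) = (a⁻¹, g)` (`apply_eq_iff`). Since `σ` is an action of `G`,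
the equation `σ_b h⁻¹ = a⁻¹` determines `h`, and then `g = γ_{h⁻¹} b`; so every `(a, b)` has
exactly one preimage.

Braid relation: at `(g, h, f)` both sides have first component `σ_{g h} f` and third component
`γ_{h f} g`. Since `r` preserves products, both sides have product `g h f`, so the middle
components agree by cancellation.
-/

/-- A braiding operator on a group `(G, ·)` with identity `1`: a map
`r : G × G → G × G`, written `r (g, h) = (σ_g h, γ_h g)`, satisfying the
compatibility axioms with the group structure. -/
structure IsBraidingOperator (G : Type*) [Group G] (r : G × G → G × G) : Prop where
  mul_eq : ∀ g h : G, (r (g, h)).1 * (r (g, h)).2 = g * h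
  one_left : ∀ g : G, r (1, g) = (g, 1)
  one_right : ∀ g : G, r (g, 1) = (1, g)
  braid_left : ∀ g h f : G,
    r (g * h, f) = ((r (g, (r (h, f)).1)).1, (r (g, (r (h, f)).1)).2 * (r (h, f)).2)
  braid_right : ∀ g h f : G,
    r (g, h * f) = ((r (g, h)).1 * (r ((r (g, h)).2, f)).1, (r ((r (g, h)).2, f)).2)

namespace IsBraidingOperator

variable {G : Type*} [Group G] {r : G × G → G × G}

lemma inverse_apply (hr : IsBraidingOperator G r) {g h a b : G} (H : r (g, h) = (a, b)) :
    r (b, h⁻¹) = (a⁻¹, g) := by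
  have h1 := hr.braid_right g h h⁻¹
  rw [mul_inv_cancel, hr.one_right, H, Prod.mk.injEq] at h1
  exact Prod.ext (eq_inv_of_mul_eq_one_right h1.1.symm) h1.2.symm

lemma apply_eq_iff (hr : IsBraidingOperator G r) {g h a b : G} :
    r (g, h) = (a, b) ↔ r (b, h⁻¹) = (a⁻¹, g) :=
  ⟨hr.inverse_apply, fun H => by simpa using hr.inverse_apply H⟩

lemma fst_mul (hr : IsBraidingOperator G r) (g h f : G) :
    (r (g * h, f)).1 = (r (g, (r (h, f)).1)).1 := by
  rw [hr.braid_left]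

lemma snd_mul (hr : IsBraidingOperator G r) (g h f : G) :
    (r (g, h * f)).2 = (r ((r (g, h)).2, f)).2 := by
  rw [hr.braid_right]

/-- `σ_b` is invertible, with inverse `σ_{b⁻¹}`. -/
lemma fst_eq_iff (hr : IsBraidingOperator G r) {b x y : G} :
    (r (b, x)).1 = y ↔ x = (r (b⁻¹, y)).1 := by
  constructor
  · rintro rfl
    rw [← hr.fst_mul, inv_mul_cancel, hr.one_left]
  · rintro rfl
    rw [← hr.fst_mul, mul_inv_cancel, hr.one_left]

lemma bijective (hr : IsBraidingOperator G r) : Function.Bijective r := by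
  constructor
  · rintro ⟨g, h⟩ ⟨g', h'⟩ H
    have e := hr.inverse_apply (Prod.mk.eta (p := r (g, h))).symm
    have e' := hr.inverse_apply (H.symm.trans (Prod.mk.eta (p := r (g, h))).symm)
    have hh : h = h' := inv_injective <|
      (hr.fst_eq_iff.1 (congrArg Prod.fst e)).trans
        (hr.fst_eq_iff.1 (congrArg Prod.fst e')).symm
    subst hh
    have hg : g = g' := congrArg Prod.snd (e.symm.trans e')
    rw [hg]
  · rintro ⟨a, b⟩
    -- `x` plays the role of `h⁻¹`: it is the solution of `σ_b x = a⁻¹`.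
    obtain ⟨x, hx⟩ : ∃ x, (r (b, x)).1 = a⁻¹ := ⟨_, hr.fst_eq_iff.2 rfl⟩
    exact ⟨((r (b, x)).2, x⁻¹), hr.apply_eq_iff.2 (by rw [inv_inv, ← hx])⟩

lemma braid_relation (hr : IsBraidingOperator G r) :
    (fun p : G × G × G => (p.1, r (p.2.1, p.2.2))) ∘
          (fun p : G × G × G => ((r (p.1, p.2.1)).1, (r (p.1, p.2.1)).2, p.2.2)) ∘
          (fun p : G × G × G => (p.1, r (p.2.1, p.2.2)))
        = (fun p : G × G × G => ((r (p.1, p.2.1)).1, (r (p.1, p.2.1)).2, p.2.2)) ∘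
          (fun p : G × G × G => (p.1, r (p.2.1, p.2.2))) ∘
          (fun p : G × G × G => ((r (p.1, p.2.1)).1, (r (p.1, p.2.1)).2, p.2.2)) := by
  -- Triples with equal products and equal outer components are equal.
  have key : ∀ p q : G × G × G, p.1 = q.1 → p.2.2 = q.2.2 →
      p.1 * (p.2.1 * p.2.2) = q.1 * (q.2.1 * q.2.2) → p = q := by
    rintro ⟨a, b, c⟩ ⟨a', b', c'⟩ h1 h3 h
    simp only at h1 h3 h
    subst h1 h3
    rw [mul_right_cancel (mul_left_cancel h)]
  funext ⟨g, h, f⟩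
  apply key
  · simp only [Function.comp_apply]
    rw [← hr.fst_mul, ← hr.fst_mul, hr.mul_eq]
  · simp only [Function.comp_apply]
    rw [← hr.snd_mul, ← hr.snd_mul, hr.mul_eq]
  · simp only [Function.comp_apply]
    rw [hr.mul_eq, ← mul_assoc, hr.mul_eq, mul_assoc, hr.mul_eq,
      ← mul_assoc (r ((r (g, h)).1, _)).1, hr.mul_eq, mul_assoc, hr.mul_eq, ← mul_assoc,
      ← mul_assoc, hr.mul_eq]

end IsBraidingOperator

/-- a braiding operator on a group is a bijection of `G × G` and
satisfies the braid relation
`(id × r) ∘ (r × id) ∘ (id × r) = (r × id) ∘ (id × r) ∘ (r × id)` on `G × G × G`. -/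
theorem braidingOperator_bijective_and_braid_relation
    {G : Type*} [Group G] (r : G × G → G × G) (hr : IsBraidingOperator G r) :
    Function.Bijective r ∧
      ((fun p : G × G × G => (p.1, r (p.2.1, p.2.2))) ∘
          (fun p : G × G × G => ((r (p.1, p.2.1)).1, (r (p.1, p.2.1)).2, p.2.2)) ∘
          (fun p : G × G × G => (p.1, r (p.2.1, p.2.2)))
        = (fun p : G × G × G => ((r (p.1, p.2.1)).1, (r (p.1, p.2.1)).2, p.2.2)) ∘
          (fun p : G × G × G => (p.1, r (p.2.1, p.2.2))) ∘
          (fun p : G × G × G => ((r (p.1, p.2.1)).1, (r (p.1, p.2.1)).2, p.2.2))) :=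
  ⟨hr.bijective, hr.braid_relation⟩
end

section
/- Let r be a braiding operator on a group (G,·) with identity e, with r(g,h) = (σ_g(h), γ_h(g)). Define x ⋆ y := x·σ_{x^{-1}}(y) for x,y ∈ G. Then (G,⋆) is a group with identity e, and (G,·,⋆) is a skew left brace, i.e. a·(b⋆c) = (a·b) ⋆ a^⋆ ⋆ (a·c) holds for all a,b,c ∈ G, where a^⋆ denotes the ⋆-inverse of a. -/
/-- for a braiding operator `r` on `G`, the operation
`x ⋆ y := x · σ_{x⁻¹}(y)` (where `σ_g h = (r (g,h)).1`) is a group structure on `G`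
with identity `1`, and `(G, ·, ⋆)` is a skew left brace:
`a·(b ⋆ c) = ((a·b) ⋆ a^⋆) ⋆ (a·c)` where `a^⋆` is the `⋆`-inverse of `a`. -/
theorem skewBrace_of_braidingOperator
    {G : Type*} [Group G] (r : G × G → G × G) (hr : IsBraidingOperator G r)
    (star : G → G → G) (hstar : ∀ x y : G, star x y = x * (r (x⁻¹, y)).1) :
    ∃ sInv : G → G,
      (∀ x y z : G, star (star x y) z = star x (star y z)) ∧
      (∀ x : G, star 1 x = x) ∧ (∀ x : G, star x 1 = x) ∧
      (∀ x : G, star (sInv x) x = 1) ∧ (∀ x : G, star x (sInv x) = 1) ∧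
      (∀ a b c : G, a * star b c = star (star (a * b) (sInv a)) (a * c)) := by
  have one_l : ∀ x, (r (1, x)).1 = x := fun x => by rw [hr.one_left]
  have one_r : ∀ x, (r (x, 1)).1 = 1 := fun x => by rw [hr.one_right]
  have act : ∀ g h x, (r (g * h, x)).1 = (r (g, (r (h, x)).1)).1 := fun g h x => by
    rw [hr.braid_left]
  have snd : ∀ g h, (r (g, h)).2 = (r (g, h)).1⁻¹ * g * h := fun g h => by
    rw [mul_assoc, ← hr.mul_eq g h, inv_mul_cancel_left]
  have σ_star : ∀ g x y, (r (g, star x y)).1 = star (r (g, x)).1 (r (g, y)).1 := by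
    intro g x y
    -- The second factor is `σ` of `σ_g(x)⁻¹ g x` applied to `σ_{x⁻¹}(y)`; the `x`s cancel.
    rw [hstar, hstar, hr.braid_right]
    simp only
    rw [snd, ← act, mul_inv_cancel_right, act]
  have mul_star : ∀ a b, a * b = star a (r (a, b)).1 := fun a b => by
    rw [hstar, ← act, inv_mul_cancel, one_l]
  have assoc : ∀ x y z, star (star x y) z = star x (star y z) := by
    intro x y z
    rw [hstar x (star y z), σ_star, hstar (r (x⁻¹, y)).1, ← act, hstar (star x y), hstar x y,
      mul_inv_rev, mul_assoc]
  have star_one : ∀ x, star x 1 = x := fun x => by rw [hstar, one_r, mul_one]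
  have one_star : ∀ x, star 1 x = x := fun x => by rw [hstar, inv_one, one_l, one_mul]
  have right_inv : ∀ x, star x (r (x, x⁻¹)).1 = 1 := fun x => by
    rw [← mul_star, mul_inv_cancel]
  have left_inv : ∀ x, star (r (x, x⁻¹)).1 x = 1 := by
    intro x
    -- In a monoid where every element has a right inverse, right inverses are two-sided.
    have h := right_inv (r (x, x⁻¹)).1
    have hx : (r ((r (x, x⁻¹)).1, (r (x, x⁻¹)).1⁻¹)).1 = x := by
      rw [← one_star (r ((r (x, x⁻¹)).1, _)).1, ← right_inv x, assoc, h, star_one]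
    rwa [hx] at h
  refine ⟨fun x => (r (x, x⁻¹)).1, assoc, one_star, star_one, left_inv, right_inv, ?_⟩
  intro a b c
  dsimp only
  rw [mul_star a (star b c), σ_star, ← assoc, ← mul_star a b, mul_star a c, assoc (a * b),
    ← assoc _ a, left_inv, one_star]
end

section
/- Let r be a braiding operator on a group (G,·) with identity e, with r(g,h) = (σ_g(h), γ_h(g)), and let ⋆ be the group structure x ⋆ y := x·σ_{x^{-1}}(y) on G, with a^⋆ the ⋆-inverse of a. Then for all a,b ∈ G: a^⋆ ⋆ (a·b) = σ_a(b) and (σ_a(b))^{-1}·a·b = γ_b(a). In particular the braiding operator associated to the skew left brace (G,·,⋆) by (a,b) ↦ (a^⋆⋆(a·b), (a^⋆⋆(a·b))^{-1}·a·b) coincides with r. -/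
/-- for a braiding operator `r` on `G` and the second group structure
`x ⋆ y := x · σ_{x⁻¹}(y)`, if `a^⋆` denotes the `⋆`-inverse of `a`, then
`a^⋆ ⋆ (a·b) = σ_a(b)` and `(σ_a(b))⁻¹·a·b = γ_b(a)`; in particular the braiding
operator associated to the skew brace `(G, ·, ⋆)` coincides with `r`. -/
theorem braidingOperator_recovered_from_star
    {G : Type*} [Group G] (r : G × G → G × G) (hr : IsBraidingOperator G r)
    (star : G → G → G) (hstar : ∀ x y : G, star x y = x * (r (x⁻¹, y)).1) :
    ∀ a aStar : G, star aStar a = 1 → star a aStar = 1 →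
      ∀ b : G,
        star aStar (a * b) = (r (a, b)).1 ∧
        ((r (a, b)).1)⁻¹ * (a * b) = (r (a, b)).2 ∧
        r (a, b) = (star aStar (a * b), (star aStar (a * b))⁻¹ * (a * b)) := by
  intro a c hc _ b
  rw [hstar] at hc
  have hσ : (r (c⁻¹, a)).1 = c⁻¹ := eq_inv_of_mul_eq_one_right hc
  -- As `σ_{c⁻¹}(a) = c⁻¹`, the product rule `σ · γ = c⁻¹ * a` leaves `γ_a(c⁻¹) = a`.
  have hγ : (r (c⁻¹, a)).2 = a := by
    have h := hr.mul_eq c⁻¹ a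
    rw [hσ] at h
    exact mul_left_cancel h
  -- Hence `σ_{c⁻¹}(a * b) = c⁻¹ * σ_a(b)`.
  have h1 : star c (a * b) = (r (a, b)).1 := by
    rw [hstar, hr.braid_right, hσ, hγ, mul_inv_cancel_left]
  have h2 : ((r (a, b)).1)⁻¹ * (a * b) = (r (a, b)).2 := by
    rw [← hr.mul_eq a b, inv_mul_cancel_left]
  exact ⟨h1, h2, by rw [h1, h2]⟩
end

section
/- Let (B,·,⋆) be a skew left brace and for a,b ∈ B set λ_a(b) = a^⋆ ⋆ (a·b). Then the map r : B×B → B×B defined by r(a,b) = (λ_a(b), λ_a(b)^{-1}·(a·b)), where λ_a(b)^{-1} is the ·-inverse of λ_a(b), is a braiding operator on the group (B,·). -/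
/-- A skew left brace structure on a group `(B, ·)`: a second group structure
`(B, ⋆)` (with identity `sOne` and inversion `sInv`) such that
`a·(b ⋆ c) = ((a·b) ⋆ a^⋆) ⋆ (a·c)` for all `a b c`. -/
structure IsSkewBrace (B : Type*) [Group B]
    (star : B → B → B) (sOne : B) (sInv : B → B) : Prop where
  star_assoc : ∀ a b c : B, star (star a b) c = star a (star b c)
  one_star : ∀ a : B, star sOne a = a
  star_one : ∀ a : B, star a sOne = a
  inv_star : ∀ a : B, star (sInv a) a = sOne
  star_inv : ∀ a : B, star a (sInv a) = sOne
  compat : ∀ a b c : B, a * star b c = star (star (a * b) (sInv a)) (a * c)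

namespace IsSkewBrace

variable {B : Type*} [Group B] {star : B → B → B} {sOne : B} {sInv : B → B}

theorem inv_star_cancel (h : IsSkewBrace B star sOne sInv) (a b : B) :
    star (sInv a) (star a b) = b := by
  rw [← h.star_assoc, h.inv_star, h.one_star]

theorem star_inv_cancel (h : IsSkewBrace B star sOne sInv) (a b : B) :
    star a (star (sInv a) b) = b := by
  rw [← h.star_assoc, h.star_inv, h.one_star]

/-- The two group structures share their identity: the compatibility axiom at `a = b = 1`,
`c = sOne` reduces to `1 = sOne`. -/
theorem sOne_eq_one (h : IsSkewBrace B star sOne sInv) : sOne = 1 := by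
  have h1 := h.compat 1 1 sOne
  simp only [one_mul, h.star_one, h.star_inv] at h1
  exact h1.symm

/-- The map `λ_a(b) = a^⋆ ⋆ (a·b)`, with the operations of the brace passed explicitly. -/
def lam (star : B → B → B) (sInv : B → B) (a b : B) : B := star (sInv a) (a * b)

theorem star_lam (h : IsSkewBrace B star sOne sInv) (a b : B) :
    star a (lam star sInv a b) = a * b :=
  h.star_inv_cancel a (a * b)

theorem lam_star (h : IsSkewBrace B star sOne sInv) (a b c : B) :
    lam star sInv a (star b c) = star (lam star sInv a b) (lam star sInv a c) := by
  simp only [lam, h.compat, h.star_assoc]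

theorem lam_mul (h : IsSkewBrace B star sOne sInv) (a b c : B) :
    lam star sInv (a * b) c = lam star sInv a (lam star sInv b c) := by
  have key : a * b * c = star (a * b) (lam star sInv a (lam star sInv b c)) := by
    rw [mul_assoc, ← h.star_lam b c, h.compat, h.star_assoc]
    rfl
  rw [lam, key, h.inv_star_cancel]

theorem lam_one_left (h : IsSkewBrace B star sOne sInv) (b : B) : lam star sInv 1 b = b := by
  have h1 := h.star_lam 1 b
  rwa [← h.sOne_eq_one, h.one_star, h.sOne_eq_one, one_mul] at h1

theorem lam_one_right (h : IsSkewBrace B star sOne sInv) (a : B) : lam star sInv a 1 = 1 := by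
  rw [lam, mul_one, h.inv_star, h.sOne_eq_one]

/-- The first component of `braid_right`. -/
theorem lam_mul_right (h : IsSkewBrace B star sOne sInv) (g k f : B) :
    lam star sInv g (k * f) = lam star sInv g k *
      lam star sInv ((lam star sInv g k)⁻¹ * (g * k)) f := by
  rw [← h.star_lam (lam star sInv g k), ← h.lam_mul, mul_inv_cancel_left, h.lam_mul,
    ← h.lam_star, h.star_lam]

end IsSkewBrace

/-- for a skew left brace `(B, ·, ⋆)` with `λ_a(b) = a^⋆ ⋆ (a·b)`,
the map `r (a, b) = (λ_a(b), λ_a(b)⁻¹·(a·b))` is a braiding operator on `(B, ·)`. -/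
theorem skewBrace_gives_braidingOperator
    {B : Type*} [Group B] (star : B → B → B) (sOne : B) (sInv : B → B)
    (h : IsSkewBrace B star sOne sInv) :
    IsBraidingOperator B (fun p : B × B =>
      (star (sInv p.1) (p.1 * p.2), (star (sInv p.1) (p.1 * p.2))⁻¹ * (p.1 * p.2))) := by
  change IsBraidingOperator B (fun p : B × B =>
    (IsSkewBrace.lam star sInv p.1 p.2, (IsSkewBrace.lam star sInv p.1 p.2)⁻¹ * (p.1 * p.2)))
  refine ⟨fun g k => ?_, fun g => ?_, fun g => ?_, fun g k f => ?_, fun g k f => ?_⟩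
  · simp
  · simp [h.lam_one_left]
  · simp [h.lam_one_right]
  · simp [h.lam_mul, mul_assoc]
  · refine Prod.ext (h.lam_mul_right g k f) ?_
    simp only [h.lam_mul_right g k f]
    group
end

section
/- Let G be a group with subgroups G₊, G₋ giving a unique factorization G = G₊G₋, with induced maps α, β, δ, ε as in the context. Suppose η, ξ : G₋ → G₊ are group homomorphisms such that for all u,v ∈ G₋ and x ∈ G₊: δ(v, ξ(u)) = ξ(α(η(v), u)); β(η(v), u) = η(ε(v, ξ(u))); u·v = α(η(u), v)·ε(u, ξ(v)); δ(u,x)·η(ε(u,x)) = ξ(u)·x; and δ(u,x)·ξ(ε(u,x)) = η(u)·x. Then the map r : G₋×G₋ → G₋×G₋ defined by r(u,v) = (α(η(u), v), ε(u, ξ(v))) is a braiding operator on the group G₋. -/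
/-- let `G = G₊G₋` be a group with unique factorisation, with the
induced mutual actions `α, β, δ, ε` defined by `x·u = α(x,u)·β(x,u)` and
`u·x = δ(u,x)·ε(u,x)`. Given homomorphisms `η, ξ : G₋ → G₊` satisfying the five
compatibility equations, `r(u,v) = (α(η(u), v), ε(u, ξ(v)))` is a braiding
operator on the group `G₋`. -/
theorem braidingOperator_of_uniqueFactorization
    {G : Type*} [Group G] (Gp Gm : Subgroup G)
    (hfac : ∀ g : G, ∃! p : Gp × Gm, (p.1 : G) * (p.2 : G) = g)
    (α : Gp → Gm → Gm) (β : Gp → Gm → Gp)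
    (δ : Gm → Gp → Gp) (ε : Gm → Gp → Gm)
    (hαβ : ∀ (x : Gp) (u : Gm), (x : G) * (u : G) = (α x u : G) * (β x u : G))
    (hδε : ∀ (u : Gm) (x : Gp), (u : G) * (x : G) = (δ u x : G) * (ε u x : G))
    (η ξ : Gm →* Gp)
    (h1 : ∀ u v : Gm, δ v (ξ u) = ξ (α (η v) u))
    (h2 : ∀ u v : Gm, β (η v) u = η (ε v (ξ u)))
    (h3 : ∀ u v : Gm, u * v = α (η u) v * ε u (ξ v))
    (h4 : ∀ (u : Gm) (x : Gp), δ u x * η (ε u x) = ξ u * x)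
    (h5 : ∀ (u : Gm) (x : Gp), δ u x * ξ (ε u x) = η u * x) :
    IsBraidingOperator Gm (fun p : Gm × Gm => (α (η p.1) p.2, ε p.1 (ξ p.2))) := by
  -- Uniqueness of `G₊G₋` factorizations, and of `G₋G₊` factorizations by inversion.
  have uniq : ∀ (x y : Gp) (u v : Gm), (x : G) * u = y * v → u = v := by
    intro x y u v h
    have := (hfac (y * v)).unique (y₁ := (x, u)) (y₂ := (y, v)) h rfl
    exact (Prod.ext_iff.mp this).2
  have uniq' : ∀ (u v : Gm) (x y : Gp), (u : G) * x = v * y → u = v := by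
    intro u v x y h
    refine inv_injective (uniq x⁻¹ y⁻¹ u⁻¹ v⁻¹ ?_)
    simpa using congrArg (·⁻¹) h
  have α_one_left : ∀ u, α 1 u = u := fun u =>
    uniq' _ _ (β 1 u) 1 (by rw [← hαβ]; simp)
  have α_one_right : ∀ x, α x 1 = 1 := fun x =>
    uniq' _ _ (β x 1) x (by rw [← hαβ]; simp)
  have ε_one_left : ∀ x, ε 1 x = 1 := fun x =>
    uniq (δ 1 x) x _ _ (by rw [← hδε]; simp)
  have ε_one_right : ∀ u, ε u 1 = u := fun u =>
    uniq (δ u 1) 1 _ _ (by rw [← hδε]; simp)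
  have α_mul_left : ∀ x y u, α (x * y) u = α x (α y u) := fun x y u =>
    uniq' _ _ (β (x * y) u) (β x (α y u) * β y u) (by
      rw [← hαβ, Subgroup.coe_mul, Subgroup.coe_mul, ← mul_assoc, ← hαβ, mul_assoc, hαβ y u,
        mul_assoc])
  have α_mul_right : ∀ x u v, α x (u * v) = α x u * α (β x u) v := fun x u v =>
    uniq' _ _ (β x (u * v)) (β (β x u) v) (by
      rw [← hαβ, Subgroup.coe_mul, Subgroup.coe_mul, mul_assoc, ← hαβ, ← mul_assoc, hαβ x u,
        mul_assoc])
  have ε_mul_left : ∀ u v x, ε (u * v) x = ε u (δ v x) * ε v x := fun u v x =>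
    uniq (δ (u * v) x) (δ u (δ v x)) _ _ (by
      rw [← hδε, Subgroup.coe_mul, Subgroup.coe_mul, ← mul_assoc, ← hδε, mul_assoc, hδε v x,
        mul_assoc])
  have ε_mul_right : ∀ u x y, ε u (x * y) = ε (ε u x) y := fun u x y =>
    uniq (δ u (x * y)) (δ u x * δ (ε u x) y) _ _ (by
      rw [← hδε, Subgroup.coe_mul, Subgroup.coe_mul, mul_assoc, ← hδε, ← mul_assoc, hδε u x,
        mul_assoc])
  refine ⟨fun g h => (h3 g h).symm, fun g => ?_, fun g => ?_, fun g h f => ?_, fun g h f => ?_⟩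
  · simp [α_one_left, ε_one_left]
  · simp [α_one_right, ε_one_right]
  · simp [α_mul_left, ε_mul_left, h1]
  · simp [α_mul_right, ε_mul_right, h2]
end

section
/- Let (X,r) be a non-degenerate set-theoretical YBE solution, with r(x,y) = (σ_x(y), γ_y(x)), and let G(X,r) be its universal group with canonical map i : X → G(X,r). Then there exists a unique braiding operator r̄ on the group G(X,r) such that r̄(i(x), i(y)) = (i(σ_x(y)), i(γ_y(x))) for all x,y ∈ X. -/
/-!
Write `G` for the universal group. A braiding operator is determined by its first component
`g ↦ σ_g`, since `γ_h(g) = σ_g(h)⁻¹ g h`; what has to be found is an action `g ↦ σ_g` of `G` on the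
set `G` such that `σ_g(h f) = σ_g(h) σ_{γ_h(g)}(f)`.

For `g = x ∈ X` such maps are cocycles: a `Mealy` machine with state set `X` reads `h ∈ G`, outputs
`σ_x(h) ∈ G` and moves to the state `γ_h(x) ∈ X`. A machine is prescribed freely on the generators,
subject to the defining relations of `G` (`Mealy.exists_of_gen`), and a map of states that is
compatible with two machines on the generators is compatible with them on all of `G`
(`Mealy.hom_of_gen`). For the machine `fwd` built from `σ` and `γ`, the relations are the braid
relation. The second principle then yields

* `x h = σ_x(h) γ_h(x)` in `G` (`NDYBE.fwd_mul`);
* `σ_x σ_y = σ_{x'} σ_{y'}` on `G` when `(x', y') = r(x, y)` (`NDYBE.fwd_comm`), because `r` is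
  an endomorphism of the composite of `fwd` with itself;
* bijectivity of `σ_x : G → G`, the inverse being given by a second machine `bwd`, whose state
  transitions are the inverses of the maps `τ_y` (`NDYBE.bwd_fwd`, `NDYBE.fwd_bwd`).

Hence `x ↦ σ_x` extends to a homomorphism `G → Perm G`, and the cocycle identity passes from
generators to all `g`. For uniqueness, any braiding operator with the given values on generators
agrees with `fwd` on `X × G`, and then with the constructed one on `G × G`.
-/

/-- The map `X × X → X × X` given by `(x, y) ↦ (σ_x(y), γ_y(x))`. -/
def rmap {X : Type*} (σ γ : X → X → X) : X × X → X × X :=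
  fun p => (σ p.1 p.2, γ p.2 p.1)

/-- `r × id : X × X × X → X × X × X`, applying `r` to the first two factors. -/
def lift12 {X : Type*} (r : X × X → X × X) : X × X × X → X × X × X :=
  fun p => ((r (p.1, p.2.1)).1, (r (p.1, p.2.1)).2, p.2.2)

/-- `id × r : X × X × X → X × X × X`, applying `r` to the last two factors. -/
def lift23 {X : Type*} (r : X × X → X × X) : X × X × X → X × X × X :=
  fun p => (p.1, r (p.2.1, p.2.2))

/-- A non-degenerate set-theoretical solution `(X, r)` of the Yang–Baxter equation:
`r (x, y) = (σ_x(y), γ_y(x))` is a bijection with inverse `r⁻¹ (x, y) = (τ_x(y), ρ_y(x))`,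
`r` satisfies the braid relation, and all the maps `σ_x, γ_y, τ_x, ρ_y` are bijections. -/
structure NDYBE (X : Type*) where
  σ : X → X → X
  γ : X → X → X
  τ : X → X → X
  ρ : X → X → X
  braid : lift23 (rmap σ γ) ∘ lift12 (rmap σ γ) ∘ lift23 (rmap σ γ)
        = lift12 (rmap σ γ) ∘ lift23 (rmap σ γ) ∘ lift12 (rmap σ γ)
  inv_left : ∀ p : X × X, rmap τ ρ (rmap σ γ p) = p
  inv_right : ∀ p : X × X, rmap σ γ (rmap τ ρ p) = p
  σ_bij : ∀ x : X, Function.Bijective (σ x)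
  γ_bij : ∀ y : X, Function.Bijective (γ y)
  τ_bij : ∀ x : X, Function.Bijective (τ x)
  ρ_bij : ∀ y : X, Function.Bijective (ρ y)

/-- The defining relations `x·y = σ_x(y)·γ_y(x)` of the universal group `G(X,r)`
of a set-theoretical YBE solution, as elements of the free group on `X`. -/
def ybeRels {X : Type*} (σ γ : X → X → X) : Set (FreeGroup X) :=
  {w | ∃ x y : X,
    w = FreeGroup.of x * FreeGroup.of y * (FreeGroup.of (σ x y) * FreeGroup.of (γ y x))⁻¹}

/-! ### Mealy machines over a group -/

/-- A machine with input and output in a group `G` and set of states `A`: in state `a` it reads `h`,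
outputs `out h a` and moves to the state `next h a`. Equivalently, a right action of `G` on `A`
with a `G`-valued cocycle. -/
structure Mealy (G A : Type*) [Group G] where
  out : G → A → G
  next : G → A → A
  out_one : ∀ a, out 1 a = 1
  next_one : ∀ a, next 1 a = a
  out_mul : ∀ h f a, out (h * f) a = out h a * out f (next h a)
  next_mul : ∀ h f a, next (h * f) a = next f (next h a)

namespace Mealy

variable {G A B : Type*} [Group G]

lemma next_next_inv (M : Mealy G A) (h : G) (a : A) : M.next h (M.next h⁻¹ a) = a := by
  rw [← M.next_mul, inv_mul_cancel, M.next_one]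

lemma next_inv_next (M : Mealy G A) (h : G) (a : A) : M.next h⁻¹ (M.next h a) = a := by
  rw [← M.next_mul, mul_inv_cancel, M.next_one]

lemma out_inv (M : Mealy G A) (h : G) (a : A) :
    M.out h⁻¹ a = (M.out h (M.next h⁻¹ a))⁻¹ := by
  rw [eq_inv_iff_mul_eq_one, ← M.out_mul, inv_mul_cancel, M.out_one]

/-- The composite machine: the output of `N` is the input of `M`. -/
def comp (M : Mealy G A) (N : Mealy G B) : Mealy G (A × B) where
  out h a := M.out (N.out h a.2) a.1
  next h a := (M.next (N.out h a.2) a.1, N.next h a.2)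
  out_one a := by simp [M.out_one, N.out_one]
  next_one a := by simp [M.next_one, N.next_one, N.out_one]
  out_mul h f a := by simp [M.out_mul, N.out_mul]
  next_mul h f a := by simp [M.next_mul, N.next_mul, N.out_mul]

/-- The machine with the same transitions as `M` that outputs its input. -/
def echo (M : Mealy G A) : Mealy G A where
  out h _ := h
  next := M.next
  out_one _ := rfl
  next_one := M.next_one
  out_mul _ _ _ := rfl
  next_mul := M.next_mul

/-- The machine with the same transitions as `M` whose output is the coboundary
`j(a) h j(next h a)⁻¹`. -/
def cobdry (M : Mealy G A) (j : A → G) : Mealy G A where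
  out h a := j a * h * (j (M.next h a))⁻¹
  next := M.next
  out_one a := by simp [M.next_one]
  next_one := M.next_one
  out_mul h f a := by simp [M.next_mul, mul_assoc]
  next_mul := M.next_mul

/-- A map of states that respects two machines on a generating set respects them on all of `G`. -/
lemma hom_of_gen (M : Mealy G A) (N : Mealy G B) (φ : A → B) {T : Set G}
    (hT : Subgroup.closure T = ⊤)
    (hgen : ∀ t ∈ T, ∀ a, M.out t a = N.out t (φ a) ∧ φ (M.next t a) = N.next t (φ a))
    (h : G) : ∀ a, M.out h a = N.out h (φ a) ∧ φ (M.next h a) = N.next h (φ a) := by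
  have hh : h ∈ Subgroup.closure T := hT ▸ Subgroup.mem_top h
  induction hh using Subgroup.closure_induction with
  | mem t ht => exact hgen t ht
  | one => intro a; simp [out_one, next_one]
  | mul h f _ _ ih1 ih2 =>
    intro a
    simp only [out_mul, next_mul]
    rw [(ih1 a).1, (ih2 _).1, (ih2 _).2, (ih1 a).2]
    exact ⟨rfl, rfl⟩
  | inv h _ ih =>
    intro a
    have key : φ (M.next h⁻¹ a) = N.next h⁻¹ (φ a) := by
      have := (ih (M.next h⁻¹ a)).2
      rw [next_next_inv] at this
      rw [this, next_inv_next]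
    exact ⟨by rw [out_inv, (ih _).1, key, ← out_inv], key⟩

end Mealy

/-! ### Machines over the universal group -/

section UniversalGroup

variable {X : Type*}

/-- The universal group `G(X, r)`. -/
abbrev UGrp (S : NDYBE X) : Type _ := PresentedGroup (ybeRels S.σ S.γ)

/-- The canonical map `i : X → G(X, r)`. -/
abbrev NDYBE.of (S : NDYBE X) (x : X) : UGrp S := PresentedGroup.of x

/-- Machines over `G(X, r)` may be prescribed on generators, provided that both sides of each
defining relation give the same output and the same final state. -/
lemma Mealy.exists_of_gen {A : Type*} (S : NDYBE X) (s : X → A → UGrp S) (P : X → Equiv.Perm A)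
    (hs : ∀ y z a, s y a * s z (P y a) =
      s (S.σ y z) a * s (S.γ z y) (P (S.σ y z) a))
    (hP : ∀ y z a, P z (P y a) = P (S.γ z y) (P (S.σ y z) a)) :
    ∃ M : Mealy (UGrp S) A, ∀ y a, M.out (S.of y) a = s y a ∧ M.next (S.of y) a = P y a := by
  -- A machine amounts to a right action on `G × A` commuting with left multiplication on `G`.
  let e : X → Equiv.Perm (UGrp S × A) := fun y =>
    { toFun := fun q => (q.1 * s y q.2, P y q.2)
      invFun := fun q => (q.1 * (s y ((P y).symm q.2))⁻¹, (P y).symm q.2)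
      left_inv := fun q => by simp
      right_inv := fun q => by simp }
  have hrel : ∀ w ∈ ybeRels S.σ S.γ, FreeGroup.lift (fun y => MulOpposite.op (e y)) w = 1 := by
    rintro w ⟨y, z, rfl⟩
    rw [map_mul, map_inv, mul_inv_eq_one]
    simp only [map_mul, FreeGroup.lift_apply_of, ← MulOpposite.op_mul]
    congr 1
    ext1 q
    simp only [Equiv.Perm.mul_apply, e, Equiv.coe_fn_mk, mul_assoc]
    rw [hs, hP]
  let Φ : UGrp S →* (Equiv.Perm (UGrp S × A))ᵐᵒᵖ := PresentedGroup.toGroup hrel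
  let E : UGrp S → Equiv.Perm (UGrp S × A) := fun h => (Φ h).unop
  have E_of : ∀ y, E (S.of y) = e y := fun y => by simp [E, Φ]
  have E_one : E 1 = 1 := by simp [E]
  have E_mul : ∀ h f q, E (h * f) q = E f (E h q) := fun h f q => by simp [E]
  have E_inv : ∀ h q, E h (E h⁻¹ q) = q := fun h q => by
    rw [← E_mul, inv_mul_cancel, E_one]; rfl
  have E_equiv : ∀ h k q, E h (k * q.1, q.2) = (k * (E h q).1, (E h q).2) := by
    intro h
    have hh : h ∈ Subgroup.closure (Set.range (S.of)) := by
      rw [PresentedGroup.closure_range_of]; trivial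
    induction hh using Subgroup.closure_induction with
    | mem t ht =>
      obtain ⟨y, rfl⟩ := ht
      intro k q
      rw [E_of]
      simp [e, mul_assoc]
    | one => intro k q; simp [E_one]
    | mul h f _ _ ih1 ih2 => intro k q; rw [E_mul, E_mul, ih1, ih2]
    | inv h _ ih =>
      intro k q
      apply (E h).injective
      rw [E_inv, ih, E_inv]
  have E_one' : ∀ h g a, E h (g, a) = (g * (E h (1, a)).1, (E h (1, a)).2) := fun h g a => by
    simpa using E_equiv h g (1, a)
  refine ⟨⟨fun h a => (E h (1, a)).1, fun h a => (E h (1, a)).2, ?_, ?_, ?_, ?_⟩, ?_⟩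
  · intro a; simp [E_one]
  · intro a; simp [E_one]
  · intro h f a
    rw [E_mul, ← Prod.mk.eta (p := E h (1, a)), E_one']
  · intro h f a
    rw [E_mul, ← Prod.mk.eta (p := E h (1, a)), E_one']
  · intro y a
    simp only [E_of]
    simp [e]

namespace NDYBE

variable (S : NDYBE X)

lemma closure_range_of : Subgroup.closure (Set.range S.of) = ⊤ :=
  PresentedGroup.closure_range_of _

lemma of_mul_of (x y : X) : S.of x * S.of y = S.of (S.σ x y) * S.of (S.γ y x) := by
  have h : PresentedGroup.mk (ybeRels S.σ S.γ) (FreeGroup.of x * FreeGroup.of y *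
      (FreeGroup.of (S.σ x y) * FreeGroup.of (S.γ y x))⁻¹) = 1 :=
    PresentedGroup.one_of_mem ⟨x, y, rfl⟩
  rw [map_mul, map_inv, mul_inv_eq_one, map_mul, map_mul] at h
  exact h

lemma braid_fst (x y z : X) : S.σ x (S.σ y z) = S.σ (S.σ x y) (S.σ (S.γ y x) z) :=
  congrArg Prod.fst (congrFun S.braid (x, y, z))

lemma braid_snd (x y z : X) :
    S.σ (S.γ (S.σ y z) x) (S.γ z y) = S.γ (S.σ (S.γ y x) z) (S.σ x y) :=
  congrArg (fun q => q.2.1) (congrFun S.braid (x, y, z))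

lemma braid_trd (x y z : X) : S.γ (S.γ z y) (S.γ (S.σ y z) x) = S.γ z (S.γ y x) :=
  congrArg (fun q => q.2.2) (congrFun S.braid (x, y, z))

/-! ### The maps `σ_x` on the universal group and their inverses -/

/-- The machine `h ↦ (σ_x(h), γ_h(x))` extending `y ↦ (i(σ_x(y)), γ_y(x))`. -/
lemma exists_fwd : ∃ M : Mealy (UGrp S) X,
    ∀ y x, M.out (S.of y) x = S.of (S.σ x y) ∧ M.next (S.of y) x = S.γ y x := by
  refine Mealy.exists_of_gen S (fun y x => S.of (S.σ x y))
    (fun y => Equiv.ofBijective _ (S.γ_bij y)) ?_ ?_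
  · intro y z x
    simp only [Equiv.ofBijective_apply]
    rw [S.of_mul_of, ← S.braid_fst, ← S.braid_snd]
  · intro y z x
    simp only [Equiv.ofBijective_apply]
    rw [S.braid_trd]

/-- A choice of the machine `h ↦ (σ_x(h), γ_h(x))`. -/
noncomputable def fwd : Mealy (UGrp S) X := S.exists_fwd.choose

lemma fwd_out_of (x y : X) : S.fwd.out (S.of y) x = S.of (S.σ x y) :=
  (S.exists_fwd.choose_spec y x).1

lemma fwd_next_of (x y : X) : S.fwd.next (S.of y) x = S.γ y x :=
  (S.exists_fwd.choose_spec y x).2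

/-- The machine inverse to `fwd`: in state `x` it reads `σ_x(w)`, outputs `w` and moves to
`γ_w(x)`. The transition of `y = σ_x(w)` is invertible because `x = τ_y(γ_w(x))`. -/
lemma exists_bwd : ∃ M : Mealy (UGrp S) X,
    ∀ w x, M.out (S.of (S.σ x w)) x = S.of w ∧ M.next (S.of (S.σ x w)) x = S.γ w x := by
  let T : X → Equiv.Perm X := fun x => Equiv.ofBijective _ (S.σ_bij x)
  let P : X → Equiv.Perm X := fun y => (Equiv.ofBijective _ (S.τ_bij y)).symm
  have hT : ∀ x w, (T x).symm (S.σ x w) = w := fun x w => (T x).symm_apply_apply w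
  have hP : ∀ x w, P (S.σ x w) x = S.γ w x := by
    intro x w
    rw [Equiv.symm_apply_eq]
    exact (congrArg Prod.fst (S.inv_left (x, w))).symm
  have hs : ∀ y z x, S.of ((T x).symm y) * S.of ((T (P y x)).symm z) =
      S.of ((T x).symm (S.σ y z)) * S.of ((T (P (S.σ y z) x)).symm (S.γ z y)) := by
    intro y z x
    obtain ⟨w, rfl⟩ := (S.σ_bij x).2 y
    rw [hP]
    obtain ⟨v, rfl⟩ := (S.σ_bij (S.γ w x)).2 z
    rw [← S.braid_fst, ← S.braid_snd, hP, hT, hT, hT, hT]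
    exact S.of_mul_of w v
  have hPP : ∀ y z x, P z (P y x) = P (S.γ z y) (P (S.σ y z) x) := by
    intro y z x
    obtain ⟨w, rfl⟩ := (S.σ_bij x).2 y
    rw [hP]
    obtain ⟨v, rfl⟩ := (S.σ_bij (S.γ w x)).2 z
    rw [← S.braid_fst, ← S.braid_snd, hP, hP, hP]
    exact (S.braid_trd x w v).symm
  obtain ⟨M, hM⟩ := Mealy.exists_of_gen S (fun y x => S.of ((T x).symm y)) P hs hPP
  exact ⟨M, fun w x => by rw [(hM _ _).1, (hM _ _).2, hT, hP]; exact ⟨rfl, rfl⟩⟩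

/-- A choice of the machine inverse to `fwd`. -/
noncomputable def bwd : Mealy (UGrp S) X := S.exists_bwd.choose

lemma bwd_out_of (x w : X) : S.bwd.out (S.of (S.σ x w)) x = S.of w :=
  (S.exists_bwd.choose_spec w x).1

lemma bwd_next_of (x w : X) : S.bwd.next (S.of (S.σ x w)) x = S.γ w x :=
  (S.exists_bwd.choose_spec w x).2

lemma fwd_mul (x : X) (h : UGrp S) :
    S.fwd.out h x = S.of x * h * (S.of (S.fwd.next h x))⁻¹ := by
  refine (S.fwd.hom_of_gen (S.fwd.cobdry S.of) id S.closure_range_of ?_ h x).1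
  rintro _ ⟨y, rfl⟩ x
  refine ⟨?_, rfl⟩
  simp only [Mealy.cobdry, id]
  rw [eq_mul_inv_iff_mul_eq, fwd_out_of, fwd_next_of, ← S.of_mul_of]

/-- `σ_x σ_y = σ_{x'} σ_{y'}` on `G(X, r)`, where `(x', y') = r(x, y)`. -/
lemma fwd_comm (x y : X) (h : UGrp S) :
    S.fwd.out (S.fwd.out h y) x = S.fwd.out (S.fwd.out h (S.γ y x)) (S.σ x y) := by
  refine ((S.fwd.comp S.fwd).hom_of_gen (S.fwd.comp S.fwd) (rmap S.σ S.γ)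
    S.closure_range_of ?_ h (x, y)).1
  rintro _ ⟨z, rfl⟩ ⟨x, y⟩
  simp only [Mealy.comp, rmap, fwd_out_of, fwd_next_of]
  rw [S.braid_fst, S.braid_snd, S.braid_trd]
  exact ⟨rfl, rfl⟩

/-- Along the diagonal of `X × X`, the composite of `fwd` followed by `bwd` outputs its input. -/
lemma bwd_fwd (x : X) (h : UGrp S) : S.bwd.out (S.fwd.out h x) x = h := by
  refine (S.fwd.echo.hom_of_gen (S.bwd.comp S.fwd) (fun x => (x, x))
    S.closure_range_of ?_ h x).1.symm
  rintro _ ⟨y, rfl⟩ x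
  simp only [Mealy.comp, Mealy.echo, fwd_out_of, fwd_next_of, bwd_out_of, bwd_next_of]
  exact ⟨trivial, trivial⟩

lemma fwd_bwd (x : X) (h : UGrp S) : S.fwd.out (S.bwd.out h x) x = h := by
  refine (S.bwd.echo.hom_of_gen (S.fwd.comp S.bwd) (fun x => (x, x))
    S.closure_range_of ?_ h x).1.symm
  rintro _ ⟨y, rfl⟩ x
  obtain ⟨w, rfl⟩ := (S.σ_bij x).2 y
  simp only [Mealy.comp, Mealy.echo, bwd_out_of, bwd_next_of, fwd_out_of, fwd_next_of]
  exact ⟨trivial, trivial⟩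

/-! ### The braiding operator -/

/-- The action `g ↦ σ_g` of `G(X, r)` on its underlying set, extending `fwd`. -/
lemma exists_act : ∃ θ : UGrp S →* Equiv.Perm (UGrp S),
    ∀ x h, θ (S.of x) h = S.fwd.out h x := by
  let e : X → Equiv.Perm (UGrp S) := fun x =>
    ⟨fun h => S.fwd.out h x, fun h => S.bwd.out h x, S.bwd_fwd x, S.fwd_bwd x⟩
  have hrel : ∀ w ∈ ybeRels S.σ S.γ, FreeGroup.lift e w = 1 := by
    rintro w ⟨x, y, rfl⟩
    rw [map_mul, map_inv, mul_inv_eq_one]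
    simp only [map_mul, FreeGroup.lift_apply_of]
    ext1 h
    exact S.fwd_comm x y h
  refine ⟨PresentedGroup.toGroup hrel, fun x h => ?_⟩
  rw [PresentedGroup.toGroup.of]
  rfl

/-- A choice of the action `g ↦ σ_g` of `G(X, r)` on its underlying set. -/
noncomputable def act : UGrp S →* Equiv.Perm (UGrp S) := S.exists_act.choose

lemma act_of (x : X) (h : UGrp S) : S.act (S.of x) h = S.fwd.out h x :=
  S.exists_act.choose_spec x h

/-- `γ_h(g)`, which the condition `σ_g(h) γ_h(g) = g h` forces to be `σ_g(h)⁻¹ g h`. -/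
noncomputable def coact (h g : UGrp S) : UGrp S := (S.act g h)⁻¹ * g * h

lemma coact_of (x : X) (h : UGrp S) : S.coact h (S.of x) = S.of (S.fwd.next h x) := by
  rw [coact, act_of, fwd_mul]
  group

lemma coact_mul (f g h : UGrp S) :
    S.coact f (g * h) = S.coact (S.act h f) g * S.coact f h := by
  simp only [coact, map_mul, Equiv.Perm.mul_apply]
  group

lemma act_mul (g : UGrp S) :
    ∀ h f, S.act g (h * f) = S.act g h * S.act (S.coact h g) f := by
  have hg : g ∈ Subgroup.closure (Set.range S.of) := by rw [closure_range_of]; trivial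
  induction hg using Subgroup.closure_induction with
  | mem t ht =>
    obtain ⟨x, rfl⟩ := ht
    intro h f
    rw [coact_of, act_of, act_of, act_of, Mealy.out_mul]
  | one => intro h f; simp [coact]
  | mul g g' _ _ ih1 ih2 =>
    intro h f
    rw [coact_mul, map_mul S.act, map_mul S.act, Equiv.Perm.mul_apply, Equiv.Perm.mul_apply,
      Equiv.Perm.mul_apply, ih2, ih1]
  | inv g _ ih =>
    intro h f
    apply (S.act g).injective
    have h1 : ∀ k, S.act g (S.act g⁻¹ k) = k := fun k => by simp
    have h2 : S.coact (S.act g⁻¹ h) g * S.coact h g⁻¹ = 1 := by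
      rw [← coact_mul]; simp [coact]
    rw [h1, ih, h1, ← Equiv.Perm.mul_apply, ← map_mul, h2]
    simp

lemma act_one (g : UGrp S) : S.act g 1 = 1 := by
  have hg : g ∈ Subgroup.closure (Set.range S.of) := by rw [closure_range_of]; trivial
  induction hg using Subgroup.closure_induction with
  | mem t ht =>
    obtain ⟨x, rfl⟩ := ht
    rw [act_of, Mealy.out_one]
  | one => simp
  | mul g g' _ _ ih1 ih2 => rw [map_mul, Equiv.Perm.mul_apply, ih2, ih1]
  | inv g _ ih => rw [map_inv, Equiv.Perm.inv_eq_iff_eq, ih]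

lemma isBraidingOperator_act :
    IsBraidingOperator (UGrp S) (fun q => (S.act q.1 q.2, S.coact q.2 q.1)) where
  mul_eq g h := by simp [coact, mul_assoc]
  one_left g := by simp [coact]
  one_right g := by simp [coact, act_one]
  braid_left g h f := by simp [coact_mul]
  braid_right g h f := by
    refine Prod.ext (S.act_mul g h f) ?_
    change S.coact (h * f) g = S.coact f (S.coact h g)
    rw [coact, act_mul]
    simp only [coact]
    group

/-! ### Uniqueness -/

/-- A braiding operator with the given values on generators is given by `fwd` on `X × G`. -/
lemma braiding_eq_fwd {r : UGrp S × UGrp S → UGrp S × UGrp S}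
    (hr : IsBraidingOperator (UGrp S) r)
    (hgen : ∀ x y : X, r (S.of x, S.of y) = (S.of (S.σ x y), S.of (S.γ y x))) (h : UGrp S) :
    ∀ x, r (S.of x, h) = (S.fwd.out h x, S.of (S.fwd.next h x)) := by
  have hh : h ∈ Subgroup.closure (Set.range S.of) := by rw [closure_range_of]; trivial
  induction hh using Subgroup.closure_induction with
  | mem t ht =>
    obtain ⟨y, rfl⟩ := ht
    intro x
    rw [hgen, fwd_out_of, fwd_next_of]
  | one => intro x; rw [hr.one_right, Mealy.out_one, Mealy.next_one]
  | mul h f _ _ ih1 ih2 =>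
    intro x
    rw [hr.braid_right, ih1, ih2, Mealy.out_mul, Mealy.next_mul]
  | inv h _ ih =>
    intro x
    -- Evaluate `r` at `(x', h * h⁻¹)`, where `x'` is the state that `h` moves to `x`.
    have key := hr.braid_right (S.of (S.fwd.next h⁻¹ x)) h h⁻¹
    rw [mul_inv_cancel, hr.one_right, ih, Mealy.next_next_inv] at key
    obtain ⟨k1, k2⟩ := Prod.mk.inj key
    refine Prod.ext ?_ k2.symm
    rw [Mealy.out_inv]
    exact (inv_eq_of_mul_eq_one_right k1.symm).symm

lemma braiding_eq_act {r : UGrp S × UGrp S → UGrp S × UGrp S}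
    (hr : IsBraidingOperator (UGrp S) r)
    (hgen : ∀ x y : X, r (S.of x, S.of y) = (S.of (S.σ x y), S.of (S.γ y x))) (g : UGrp S) :
    ∀ h, (r (g, h)).1 = S.act g h := by
  have hg : g ∈ Subgroup.closure (Set.range S.of) := by rw [closure_range_of]; trivial
  induction hg using Subgroup.closure_induction with
  | mem t ht =>
    obtain ⟨x, rfl⟩ := ht
    intro h
    rw [S.braiding_eq_fwd hr hgen, act_of]
  | one => intro h; rw [hr.one_left]; simp
  | mul g g' _ _ ih1 ih2 =>
    intro h
    rw [hr.braid_left, ih1, ih2, map_mul, Equiv.Perm.mul_apply]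
  | inv g _ ih =>
    intro h
    have key := congrArg Prod.fst (hr.braid_left g g⁻¹ h)
    rw [mul_inv_cancel, hr.one_left] at key
    simp only [ih] at key
    rw [map_inv, Equiv.Perm.eq_inv_iff_eq]
    exact key.symm

end NDYBE

end UniversalGroup

/-- for a non-degenerate set-theoretical YBE solution `(X, r)`,
there is a unique braiding operator `r̄` on the universal group
`G(X,r) = F(X)/⟨x·y = σ_x(y)·γ_y(x)⟩` with
`r̄(i(x), i(y)) = (i(σ_x(y)), i(γ_y(x)))` for all `x, y ∈ X`, where
`i : X → G(X,r)` is the canonical map. -/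
theorem universalGroup_braidingOperator {X : Type*} (S : NDYBE X) :
    ∃! rbar : PresentedGroup (ybeRels S.σ S.γ) × PresentedGroup (ybeRels S.σ S.γ) →
              PresentedGroup (ybeRels S.σ S.γ) × PresentedGroup (ybeRels S.σ S.γ),
      IsBraidingOperator (PresentedGroup (ybeRels S.σ S.γ)) rbar ∧
      ∀ x y : X, rbar (PresentedGroup.of x, PresentedGroup.of y) =
        (PresentedGroup.of (S.σ x y), PresentedGroup.of (S.γ y x)) := by
  refine ⟨fun q => (S.act q.1 q.2, S.coact q.2 q.1), ⟨S.isBraidingOperator_act, ?_⟩, ?_⟩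
  · intro x y
    change (S.act (S.of x) (S.of y), S.coact (S.of y) (S.of x)) = _
    rw [S.coact_of, S.act_of, S.fwd_out_of, S.fwd_next_of]
  · rintro r ⟨hr, hgen⟩
    funext ⟨g, h⟩
    have h1 := S.braiding_eq_act hr hgen g h
    refine Prod.ext h1 ?_
    change (r (g, h)).2 = (S.act g h)⁻¹ * g * h
    rw [← h1, mul_assoc, ← hr.mul_eq g h, inv_mul_cancel_left]
end

section
/- Let (X,r) be a non-degenerate set-theoretical YBE solution with r(x,y) = (σ_x(y), γ_y(x)), let G(X,r) be its universal group with canonical map i : X → G(X,r), let (H,s) be a group equipped with a braiding operator s, and let f : X → H be a map commuting with the braidings, i.e. s(f(x), f(y)) = (f(σ_x(y)), f(γ_y(x))) for all x,y ∈ X. Then there exists a unique group homomorphism φ : G(X,r) → H with φ ∘ i = f. -/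
/-- universal property of `G(X,r)`: for any group `H` with a
braiding operator `s` and any map `f : X → H` commuting with the braidings,
there is a unique group homomorphism `φ : G(X,r) → H` with `φ ∘ i = f`. -/
theorem universalGroup_universalProperty {X : Type*} (S : NDYBE X)
    {H : Type*} [Group H] (s : H × H → H × H) (hs : IsBraidingOperator H s)
    (f : X → H) (hf : ∀ x y : X, s (f x, f y) = (f (S.σ x y), f (S.γ y x))) :
    ∃! φ : PresentedGroup (ybeRels S.σ S.γ) →* H,
      ∀ x : X, φ (PresentedGroup.of x) = f x := by
  have hrel : ∀ w ∈ ybeRels S.σ S.γ, FreeGroup.lift f w = 1 := by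
    rintro _ ⟨x, y, rfl⟩
    -- `mul_eq` at `(f x, f y)`, with `s (f x, f y)` computed by `hf`
    have h := hs.mul_eq (f x) (f y)
    rw [hf] at h
    rw [map_mul, map_inv, mul_inv_eq_one]
    simpa using h.symm
  refine ⟨PresentedGroup.toGroup hrel, fun x => PresentedGroup.toGroup.of hrel, ?_⟩
  intro φ hφ
  ext x
  rw [hφ, PresentedGroup.toGroup.of]
end

section
/- Let (X,r) be a non-degenerate set-theoretical YBE solution, with r(x,y) = (σ_x(y), γ_y(x)). Then for every a ∈ X there exists a unique x ∈ X such that γ_x(a) = x. -/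
theorem NDYBE.gamma_law {X : Type*} (S : NDYBE X) (x y z : X) :
    S.γ (S.γ z y) (S.γ (S.σ y z) x) = S.γ z (S.γ y x) :=
  congrArg (fun p => p.2.2) (congrFun S.braid (x, y, z))

/-- The inverse of a braiding satisfies the braid relation; this is its first component. -/
theorem NDYBE.tau_law {X : Type*} (S : NDYBE X) (x y z : X) :
    S.τ x (S.τ y z) = S.τ (S.τ x y) (S.τ (S.ρ y x) z) := by
  have l12 : ∀ p, lift12 (rmap S.τ S.ρ) (lift12 (rmap S.σ S.γ) p) = p := fun p => by
    simp [lift12, S.inv_left]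
  have l23 : ∀ p, lift23 (rmap S.τ S.ρ) (lift23 (rmap S.σ S.γ) p) = p := fun p => by
    simp [lift23, S.inv_left]
  have r12 : ∀ p, lift12 (rmap S.σ S.γ) (lift12 (rmap S.τ S.ρ) p) = p := fun p => by
    simp [lift12, S.inv_right]
  have r23 : ∀ p, lift23 (rmap S.σ S.γ) (lift23 (rmap S.τ S.ρ) p) = p := fun p => by
    simp [lift23, S.inv_right]
  have key : ∀ p, lift23 (rmap S.τ S.ρ) (lift12 (rmap S.τ S.ρ) (lift23 (rmap S.τ S.ρ) p))
      = lift12 (rmap S.τ S.ρ) (lift23 (rmap S.τ S.ρ) (lift12 (rmap S.τ S.ρ) p)) := fun p => by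
    have h := congrFun S.braid
      (lift12 (rmap S.τ S.ρ) (lift23 (rmap S.τ S.ρ) (lift12 (rmap S.τ S.ρ) p)))
    simp only [Function.comp_apply, r12, r23] at h
    rw [← h]
    simp only [l12, l23]
    rw [h]
  exact congrArg (fun q => q.1) (key (x, y, z))

/-- for a non-degenerate set-theoretical YBE solution `(X, r)` with
`r (x, y) = (σ_x(y), γ_y(x))`, for every `a ∈ X` there is a unique `x ∈ X` with
`γ_x(a) = x`. -/
theorem NDYBE.exists_unique_gamma_fixed {X : Type*} (S : NDYBE X) :
    ∀ a : X, ∃! x : X, S.γ x a = x := by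
  intro a
  obtain ⟨w, hw⟩ := (S.τ_bij a).2 a
  refine ⟨w, ?_, ?_⟩
  · have h := S.inv_right (a, w)
    simp only [rmap, Prod.mk.injEq, hw] at h
    obtain ⟨h1, h2⟩ := h
    -- Here `r (a, ρ_w(a)) = (a, w)`, so the `γ`-law cancels to `γ_w = γ_{ρ_w(a)}`.
    obtain ⟨b, hb⟩ := (S.γ_bij a).2 a
    have hc := S.gamma_law b a (S.ρ w a)
    rw [h1, h2, hb] at hc
    exact hc.trans h2
  · intro x hx
    have h := S.inv_left (a, x)
    simp only [rmap, Prod.mk.injEq, hx] at h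
    obtain ⟨h1, h2⟩ := h
    -- Here `r⁻¹ (σ_a(x), x) = (a, x)`, so the `τ`-law cancels to `τ_{σ_a(x)} = τ_a`.
    obtain ⟨b, hb⟩ := (S.τ_bij x).2 x
    have hc := S.tau_law (S.σ a x) x b
    rw [h1, h2, hb, h1] at hc
    exact (S.τ_bij a).1 (hc.symm.trans hw.symm)
end

section
/- Let (X,r) be a non-degenerate set-theoretical YBE solution, with r(x,y) = (σ_x(y), γ_y(x)). For a ∈ X set p = σ_a^{-1}(a) (the unique p with σ_a(p) = a). Then x := γ_p(a) satisfies γ_x(a) = x, i.e. γ_{γ_p(a)}(a) = γ_p(a). -/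
/-- for a non-degenerate set-theoretical YBE solution `(X, r)`,
for `a ∈ X` and `p = σ_a⁻¹(a)` (i.e. the unique `p` with `σ_a(p) = a`),
the element `x := γ_p(a)` satisfies `γ_x(a) = x`, i.e. `γ_{γ_p(a)}(a) = γ_p(a)`. -/
theorem NDYBE.gamma_fixed_exists {X : Type*} (S : NDYBE X) :
    ∀ a p : X, S.σ a p = a → S.γ (S.γ p a) a = S.γ p a := by
  intro a p h
  -- The third component of the braid relation reads `γ_z γ_y = γ_{γ_z(y)} γ_{σ_y(z)}`. At `y = a`,
  -- `z = p`, where `σ_a(p) = a`, it becomes `γ_p γ_a = γ_x γ_a` with `x = γ_p(a)`.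
  have key : ∀ t : X, S.γ (S.γ p a) (S.γ a t) = S.γ p (S.γ a t) := by
    intro t
    have hb := congrArg (fun q => q.2.2) (congrFun S.braid (t, a, p))
    simpa [lift12, lift23, rmap, h] using hb
  -- Surjectivity of `γ_a` cancels `γ_a`, so `γ_x = γ_p`; evaluate both at `a`.
  obtain ⟨t, ht⟩ := (S.γ_bij a).surjective a
  simpa [ht] using key t
end

section
/- Let (X,r) be a non-degenerate set-theoretical YBE solution, with r⁻¹(x,y) = (τ_x(y), ρ_y(x)). Then for every a ∈ X there exists a unique y ∈ X such that τ_y(a) = y. -/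
namespace NDYBE

variable {X : Type*} (S : NDYBE X)

/-- The last component of the braid relation at `(u, y, z)`. -/
lemma gamma_comp (u y z : X) :
    S.γ z (S.γ y u) = S.γ (S.γ z y) (S.γ (S.σ y z) u) := by
  have h := congrFun S.braid (u, y, z)
  simp only [lift12, lift23, rmap, Function.comp, Prod.mk.injEq] at h
  exact h.2.2.symm

lemma lift12_inv (p : X × X × X) :
    lift12 (rmap S.τ S.ρ) (lift12 (rmap S.σ S.γ) p) = p := by
  simp only [lift12, Prod.mk.eta, S.inv_left]

lemma lift23_inv (p : X × X × X) :
    lift23 (rmap S.τ S.ρ) (lift23 (rmap S.σ S.γ) p) = p := by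
  simp only [lift23, Prod.mk.eta, S.inv_left]

lemma lift12_inv' (p : X × X × X) :
    lift12 (rmap S.σ S.γ) (lift12 (rmap S.τ S.ρ) p) = p := by
  simp only [lift12, Prod.mk.eta, S.inv_right]

lemma lift23_inv' (p : X × X × X) :
    lift23 (rmap S.σ S.γ) (lift23 (rmap S.τ S.ρ) p) = p := by
  simp only [lift23, Prod.mk.eta, S.inv_right]

/-- The inverse `r⁻¹` satisfies the braid relation too. -/
lemma braid_inv (p : X × X × X) :
    lift12 (rmap S.τ S.ρ) (lift23 (rmap S.τ S.ρ) (lift12 (rmap S.τ S.ρ) p))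
      = lift23 (rmap S.τ S.ρ) (lift12 (rmap S.τ S.ρ) (lift23 (rmap S.τ S.ρ) p)) := by
  have h := congrFun S.braid
    (lift23 (rmap S.τ S.ρ) (lift12 (rmap S.τ S.ρ) (lift23 (rmap S.τ S.ρ) p)))
  simp only [Function.comp, lift12_inv', lift23_inv'] at h
  conv_lhs => rw [h]
  simp only [lift12_inv, lift23_inv]

/-- The first component of the braid relation for `r⁻¹` at `(x, y, u)`. -/
lemma tau_comp (x y u : X) :
    S.τ x (S.τ y u) = S.τ (S.τ x y) (S.τ (S.ρ y x) u) := by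
  have h := S.braid_inv (x, y, u)
  simp only [lift12, lift23, rmap, Prod.mk.injEq] at h
  exact h.1.symm

lemma tau_fixed_iff (a y : X) : S.τ y a = y ↔ S.γ a y = a := by
  constructor
  · intro hy
    have h := S.inv_right (y, a)
    simp only [rmap, hy, Prod.mk.injEq] at h
    obtain ⟨hσ, hγ⟩ := h
    obtain ⟨u, hu⟩ := (S.γ_bij y).2 y
    have key := S.gamma_comp u y (S.ρ a y)
    rw [hγ, hσ, hu, hγ] at key
    exact key.symm
  · intro hy
    have h := S.inv_left (y, a)
    simp only [rmap, hy, Prod.mk.injEq] at h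
    obtain ⟨hτ, hρ⟩ := h
    obtain ⟨u, hu⟩ := (S.τ_bij a).2 a
    have key := S.tau_comp (S.σ y a) a u
    rw [hτ, hρ, hu, hτ] at key
    exact key.symm

end NDYBE

/-- for a non-degenerate set-theoretical YBE solution `(X, r)` with
`r⁻¹ (x, y) = (τ_x(y), ρ_y(x))`, for every `a ∈ X` there is a unique `y ∈ X` with
`τ_y(a) = y`. -/
theorem NDYBE.exists_unique_tau_fixed {X : Type*} (S : NDYBE X) :
    ∀ a : X, ∃! y : X, S.τ y a = y := by
  intro a
  simp only [S.tau_fixed_iff]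
  exact (S.γ_bij a).existsUnique a
end

section
/- Let (X,r) be a non-degenerate set-theoretical YBE solution, with r(x,y) = (σ_x(y), γ_y(x)) and r⁻¹(x,y) = (τ_x(y), ρ_y(x)), and let 𝔩(a) = σ_a(x_a), where x_a is the unique element with γ_{x_a}(a) = x_a. Then for every a ∈ X: 𝔩(a) = σ_a(τ_a^{-1}(a)) = γ_a(ρ_a^{-1}(a)), where τ_a^{-1} and ρ_a^{-1} denote the inverses of the bijections τ_a and ρ_a. -/
namespace NDYBE

variable {X : Type*} (S : NDYBE X)

lemma braid_apply (x y z : X) :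
    S.σ x (S.σ y z) = S.σ (S.σ x y) (S.σ (S.γ y x) z) ∧
    S.σ (S.γ (S.σ y z) x) (S.γ z y) = S.γ (S.σ (S.γ y x) z) (S.σ x y) ∧
    S.γ (S.γ z y) (S.γ (S.σ y z) x) = S.γ z (S.γ y x) := by
  have h := congrFun S.braid (x, y, z)
  simpa [lift12, lift23, rmap] using h

/-- The first component of the braid relation for the inverse solution. -/
lemma τ_braid (x y z : X) :
    S.τ x (S.τ y z) = S.τ (S.τ x y) (S.τ (S.ρ y x) z) := by
  have c12 : ∀ t, lift12 (rmap S.τ S.ρ) (lift12 (rmap S.σ S.γ) t) = t := by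
    rintro ⟨u, v, w⟩
    simp [lift12, S.inv_left]
  have c12r : ∀ t, lift12 (rmap S.σ S.γ) (lift12 (rmap S.τ S.ρ) t) = t := by
    rintro ⟨u, v, w⟩
    simp [lift12, S.inv_right]
  have c23 : ∀ t, lift23 (rmap S.τ S.ρ) (lift23 (rmap S.σ S.γ) t) = t := by
    rintro ⟨u, v, w⟩
    simp [lift23, S.inv_left]
  have c23r : ∀ t, lift23 (rmap S.σ S.γ) (lift23 (rmap S.τ S.ρ) t) = t := by
    rintro ⟨u, v, w⟩
    simp [lift23, S.inv_right]
  -- Evaluate the braid relation at the image of `(x, y, z)` under the inverse of its right side.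
  have h := congrFun S.braid
    (lift12 (rmap S.τ S.ρ) (lift23 (rmap S.τ S.ρ) (lift12 (rmap S.τ S.ρ) (x, y, z))))
  simp only [Function.comp_apply, c12r, c23r] at h
  have h' := congrArg (fun t => lift23 (rmap S.τ S.ρ)
    (lift12 (rmap S.τ S.ρ) (lift23 (rmap S.τ S.ρ) t))) h
  simp only [c12, c23] at h'
  have h1 := congrArg Prod.fst h'
  simpa [lift12, lift23, rmap] using h1.symm

end NDYBE

/-- for a non-degenerate set-theoretical YBE solution `(X, r)` and
`𝔩(a) = σ_a(x_a)` with `x_a` the unique element satisfying `γ_{x_a}(a) = x_a`,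
one has `𝔩(a) = σ_a(τ_a⁻¹(a)) = γ_a(ρ_a⁻¹(a))`, where `τ_a⁻¹(a)` is the unique `p`
with `τ_a(p) = a` and `ρ_a⁻¹(a)` is the unique `q` with `ρ_a(q) = a`. -/
theorem NDYBE.l_formulas {X : Type*} (S : NDYBE X) :
    ∀ a xa p q : X, S.γ xa a = xa → S.τ a p = a → S.ρ a q = a →
      S.σ a xa = S.σ a p ∧ S.σ a xa = S.γ a q := by
  intro a xa p q hxa hp hq
  have hinv := S.inv_left (a, xa)
  have hqv := S.inv_right (q, a)
  simp only [rmap, hxa, hq, Prod.mk.injEq] at hinv hqv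
  obtain ⟨hτl, hρl⟩ := hinv
  obtain ⟨hσv, hγv⟩ := hqv
  constructor
  · have hτ : S.τ (S.σ a xa) xa = S.τ a xa := by
      obtain ⟨z, hz⟩ := (S.τ_bij xa).surjective xa
      have h := S.τ_braid (S.σ a xa) xa z
      rwa [hτl, hρl, hz] at h
    rw [(S.τ_bij a).injective (hτ.symm.trans (hτl.trans hp.symm))]
  · have hσq : S.σ q a = q := by
      obtain ⟨z, hz⟩ := (S.σ_bij a).surjective a
      have h := (S.braid_apply (S.τ q a) a z).1
      rw [hσv, hγv, hz, hσv] at h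
      exact h.symm
    have hσm : S.σ (S.γ a q) xa = S.σ a xa := by
      have h := (S.braid_apply q a xa).1
      rw [hσq] at h
      exact ((S.σ_bij q).injective h).symm
    have hγl : S.γ (S.σ a xa) q = S.γ a q := by
      have h := (S.braid_apply q a xa).2.2
      rw [hxa] at h
      exact (S.γ_bij xa).injective h
    have h := (S.braid_apply q a xa).2.1
    rwa [hxa, hσm, hσq, hγl, hσm] at h
end

section
/- Let n be a positive integer and let div(n) be the set of positive divisors of n, partially ordered by divisibility; this is a complete lattice with join given by lcm and meet by gcd. Then div(n) admits a basis if and only if n is squarefree (i.e. every prime occurring in the factorisation of n occurs with exponent one). -/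
/-!
A prime power `p ^ (k + 1)` is join-irreducible in the divisor lattice, so it lies in every
generating set (`prime_pow_mem_of_eq_lcm`). If `n` is not squarefree, some `p ^ 2` divides `n`,
and a basis would contain the comparable elements `p` and `p ^ 2`. If `n` is squarefree, its prime
factors form a basis, since every divisor is the product, hence the lcm, of its prime factors.
-/

/-- Prime powers are join-irreducible: the proper divisors of `p ^ (k + 1)` all divide `p ^ k`. -/
lemma prime_pow_mem_of_eq_lcm {p k : ℕ} (hp : p.Prime) {S : Finset ℕ}
    (h : p ^ (k + 1) = S.lcm id) : p ^ (k + 1) ∈ S := by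
  by_contra hmem
  have hdvd : S.lcm id ∣ p ^ k := by
    refine Finset.lcm_dvd fun s hs => ?_
    have hs' : s ∣ p ^ (k + 1) := h ▸ Finset.dvd_lcm (f := id) hs
    obtain ⟨i, hi, rfl⟩ := (Nat.dvd_prime_pow hp).1 hs'
    have hne : i ≠ k + 1 := by
      rintro rfl
      exact hmem hs
    exact pow_dvd_pow p (by omega)
  rw [← h, Nat.pow_dvd_pow_iff_le_right hp.one_lt] at hdvd
  omega

lemma Squarefree.eq_lcm_primeFactors {d : ℕ} (hd : Squarefree d) :
    d = d.primeFactors.lcm id := by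
  apply Nat.dvd_antisymm
  · conv_lhs => rw [← Nat.prod_primeFactors_of_squarefree hd]
    exact Finset.prod_primes_dvd _ (fun p hp => (Nat.prime_of_mem_primeFactors hp).prime)
      fun p hp => Finset.dvd_lcm (f := id) hp
  · exact Finset.lcm_dvd fun p hp => Nat.dvd_of_mem_primeFactors hp

/-- for a positive integer `n`, the divisor lattice `div(n)`
(divisors of `n` ordered by divisibility, with join `lcm`) admits a basis — a set
`B` of divisors such that every divisor of `n` is the `lcm` of some subset of `B`
and `B` is an antichain for divisibility — if and only if `n` is squarefree. -/
theorem divisorLattice_basis_iff_squarefree (n : ℕ) (hn : 0 < n) :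
    (∃ B : Finset ℕ, B ⊆ n.divisors ∧
      (∀ d ∈ n.divisors, ∃ S : Finset ℕ, S ⊆ B ∧ d = S.lcm id) ∧
      (∀ b ∈ B, ∀ b' ∈ B, b ∣ b' → b = b')) ↔ Squarefree n := by
  constructor
  · rintro ⟨B, -, hgen, hanti⟩
    rw [Nat.squarefree_iff_prime_squarefree]
    intro p hp hpn
    rw [← pow_two] at hpn
    have hmem : ∀ k, p ^ (k + 1) ∣ n → p ^ (k + 1) ∈ B := fun k hk => by
      obtain ⟨S, hSB, hS⟩ := hgen _ (Nat.mem_divisors.2 ⟨hk, hn.ne'⟩)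
      exact hSB (prime_pow_mem_of_eq_lcm hp hS)
    have hdvd : p ^ (0 + 1) ∣ p ^ (1 + 1) := pow_dvd_pow p (by omega)
    have heq := hanti _ (hmem 0 (hdvd.trans hpn)) _ (hmem 1 hpn) hdvd
    have := Nat.pow_right_injective hp.two_le heq
    omega
  · intro hsq
    refine ⟨n.primeFactors,
      fun p hp => Nat.mem_divisors.2 ⟨Nat.dvd_of_mem_primeFactors hp, hn.ne'⟩, fun d hd => ?_,
      fun p hp q hq hpq => ?_⟩
    · have hdn := Nat.dvd_of_mem_divisors hd
      exact ⟨d.primeFactors, Nat.primeFactors_mono hdn hn.ne',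
        (hsq.squarefree_of_dvd hdn).eq_lcm_primeFactors⟩
    · exact (Nat.prime_dvd_prime_iff_eq (Nat.prime_of_mem_primeFactors hp)
        (Nat.prime_of_mem_primeFactors hq)).1 hpq
end
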